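/- Let (y1, y2) be a solution of the Berger boundary value problem with phi(0) ≠ 1 (where K = exp∘y1, phi = exp∘y2). Then for every x ∈ (0,1): 3 − 4 (phi(x) K(x))^{-1/3} + K(x)^{-1/3} phi(x)^{-4/3} > (1/36) x^2 (1−x^2)^2 (y2'(x))^2 ≥ 0. -/

import Mathlib

open Real Set

/-- Equation (E1) of the Berger Einstein ODE system:
`y1'' + (1/6)(y1')² + (1/3)(y2')² − x⁻¹(1+3x²)(1−x²)⁻¹ y1' = 0`. -/
noncomputable def BergerE1 (y1 y2 : ℝ → ℝ) (x : ℝ) : ℝ :=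
  deriv (deriv y1) x + (1/6) * (deriv y1 x)^2 + (1/3) * (deriv y2 x)^2
    - x⁻¹ * (1 + 3*x^2) * (1 - x^2)⁻¹ * deriv y1 x

/-- Equation (E2) of the Berger Einstein ODE system, with `K = exp ∘ y1`, `phi = exp ∘ y2`:
`y1'' + (1/2)(y1')² − x⁻¹(5+7x²)(1−x²)⁻¹ y1'
  + 8(1−x²)⁻²(6 − 8 K^{-1/3} phi^{-1/3} + 2 K^{-1/3} phi^{-4/3}) = 0`. -/
noncomputable def BergerE2 (y1 y2 : ℝ → ℝ) (x : ℝ) : ℝ :=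
  deriv (deriv y1) x + (1/2) * (deriv y1 x)^2
    - x⁻¹ * (5 + 7*x^2) * (1 - x^2)⁻¹ * deriv y1 x
    + 8 * ((1 - x^2)⁻¹)^2 *
      (6 - 8 * Real.exp (y1 x) ^ (-(1:ℝ)/3) * Real.exp (y2 x) ^ (-(1:ℝ)/3)
         + 2 * Real.exp (y1 x) ^ (-(1:ℝ)/3) * Real.exp (y2 x) ^ (-(4:ℝ)/3))

/-- Equation (E3) of the Berger Einstein ODE system, with `K = exp ∘ y1`, `phi = exp ∘ y2`:
`y2'' + (1/2) y1' y2' − 2x⁻¹(1+2x²)(1−x²)⁻¹ y2'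
  + 32(1−x²)⁻² K^{-1/3} phi^{-1/3}(phi⁻¹ − 1) = 0`. -/
noncomputable def BergerE3 (y1 y2 : ℝ → ℝ) (x : ℝ) : ℝ :=
  deriv (deriv y2) x + (1/2) * deriv y1 x * deriv y2 x
    - 2 * x⁻¹ * (1 + 2*x^2) * (1 - x^2)⁻¹ * deriv y2 x
    + 32 * ((1 - x^2)⁻¹)^2 * Real.exp (y1 x) ^ (-(1:ℝ)/3) * Real.exp (y2 x) ^ (-(1:ℝ)/3)
      * ((Real.exp (y2 x))⁻¹ - 1)

/-- A solution of the Berger boundary value problem: a pair `(y1, y2)` smooth on `[0,1]`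
(realized as globally smooth functions), real analytic on `(0,1]`, satisfying (E1)–(E3)
on `(0,1)`, with boundary conditions `K(1) = phi(1) = 1` (where `K = exp ∘ y1`,
`phi = exp ∘ y2`) and `y1'(0) = y2'(0) = y1'(1) = y2'(1) = 0`. -/
structure BergerBVPSolution (y1 y2 : ℝ → ℝ) : Prop where
  smooth1 : ContDiff ℝ (⊤ : ℕ∞) y1
  smooth2 : ContDiff ℝ (⊤ : ℕ∞) y2
  analytic1 : AnalyticOnNhd ℝ y1 (Ioc 0 1)
  analytic2 : AnalyticOnNhd ℝ y2 (Ioc 0 1)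
  eqE1 : ∀ x ∈ Ioo (0:ℝ) 1, BergerE1 y1 y2 x = 0
  eqE2 : ∀ x ∈ Ioo (0:ℝ) 1, BergerE2 y1 y2 x = 0
  eqE3 : ∀ x ∈ Ioo (0:ℝ) 1, BergerE3 y1 y2 x = 0
  bdryK : Real.exp (y1 1) = 1
  bdryPhi : Real.exp (y2 1) = 1
  der1_0 : deriv y1 0 = 0
  der2_0 : deriv y2 0 = 0
  der1_1 : deriv y1 1 = 0
  der2_1 : deriv y2 1 = 0

/-- If a differentiable function is nonnegative at `1` and decreases wherever it is negative, then
it is nonnegative. -/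
lemma nonneg_of_deriv_neg_of_neg {h : ℝ → ℝ} (hd : Differentiable ℝ h) (h1 : 0 ≤ h 1)
    (hb : ∀ x ∈ Ioo (0:ℝ) 1, h x < 0 → deriv h x < 0) : ∀ x ∈ Ioo (0:ℝ) 1, 0 ≤ h x := by
  intro x hx
  by_contra! hneg
  obtain ⟨c, hc, hmin⟩ := isCompact_Icc.exists_isMinOn (nonempty_Icc.2 hx.2.le)
    hd.continuous.continuousOn (s := Icc x 1)
  have hcx : h c ≤ h x := hmin (left_mem_Icc.2 hx.2.le)
  have hc1 : c < 1 := lt_of_le_of_ne hc.2 (by rintro rfl; linarith)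
  have hc' : c ∈ Ioo (0:ℝ) 1 := ⟨hx.1.trans_le hc.1, hc1⟩
  have hdc := hb c hc' (by linarith)
  have hs := (hasDerivAt_iff_tendsto_slope.1 (hd c).hasDerivAt).eventually_lt_const hdc
  have hs' := (hs.filter_mono (nhdsGT_le_nhdsNE c)).and (Ioo_mem_nhdsGT hc1)
  obtain ⟨y, hy, hy1⟩ := hs'.exists
  have hyc : h c ≤ h y := hmin ⟨hc.1.trans hy1.1.le, hy1.2.le⟩
  rw [slope_def_field] at hy
  have : 0 ≤ (h y - h c) / (y - c) := div_nonneg (by linarith) (by linarith [hy1.1])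
  linarith

/-- If a differentiable function is at most `c` at `0` and decreases wherever it exceeds `c`, then
it is at most `c`. -/
lemma le_of_deriv_neg_of_gt {h : ℝ → ℝ} {c : ℝ} (hd : Differentiable ℝ h) (h0 : h 0 ≤ c)
    (hb : ∀ x ∈ Ioo (0:ℝ) 1, c < h x → deriv h x < 0) : ∀ x ∈ Ioo (0:ℝ) 1, h x ≤ c := by
  intro x hx
  have hder : ∀ y, HasDerivAt (fun y => c - h (1 - y)) (deriv h (1 - y)) y := fun y => by
    have h2 : HasDerivAt (fun y : ℝ => 1 - y) (-1) y := by
      simpa using (hasDerivAt_id y).const_sub 1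
    have := ((hd (1 - y)).hasDerivAt.comp y h2).const_sub c
    simpa [Function.comp_def] using this
  have := nonneg_of_deriv_neg_of_neg (h := fun y => c - h (1 - y))
    (fun y => (hder y).differentiableAt) (by simpa using h0)
    (fun y hy hlt => by
      rw [(hder y).deriv]
      exact hb _ ⟨by linarith [hy.2], by linarith [hy.1]⟩ (by linarith))
    (1 - x) ⟨by linarith [hx.2], by linarith [hx.1]⟩
  simp only [sub_sub_cancel] at this
  linarith

/-- The Berger system in the rescaled unknowns `E = K^{1/2}`, `P = (1 - x²) y1'`,
`Q = -σ (1 - x²) y2'`, `u = (K phi)^{-1/3}`, `w = K^{-1/3} phi^{-4/3}`, where `σ = ±1` is the sign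
of `y2`. -/
structure RescaledBerger (σ : ℝ) (E P Q u w : ℝ → ℝ) : Prop where
  sq_eq : σ ^ 2 = 1
  dE : Differentiable ℝ E
  dP : Differentiable ℝ P
  dQ : Differentiable ℝ Q
  du : Differentiable ℝ u
  dw : Differentiable ℝ w
  E_pos : ∀ x, 0 < E x
  u_pos : ∀ x, 0 < u x
  P_one : P 1 = 0
  Q_one : Q 1 = 0
  u_one : u 1 = 1
  w_one : w 1 = 1
  E_eq : ∀ x ∈ Ioo (0:ℝ) 1, (1 - x^2) * deriv E x = E x * P x / 2
  P_eq : ∀ x ∈ Ioo (0:ℝ) 1,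
    x * (1 - x^2) * deriv P x = P x * (1 + x^2) - x * P x ^ 2 / 6 - x * Q x ^ 2 / 3
  Q_eq : ∀ x ∈ Ioo (0:ℝ) 1, x * (1 - x^2) * deriv Q x
    = Q x * (2 + 2 * x^2) - x * P x * Q x / 2 - 32 * x * (σ * (u x - w x))
  u_eq : ∀ x ∈ Ioo (0:ℝ) 1, (1 - x^2) * deriv u x = - u x * (P x - σ * Q x) / 3
  w_eq : ∀ x ∈ Ioo (0:ℝ) 1, (1 - x^2) * deriv w x = - w x * (P x - 4 * σ * Q x) / 3
  constraint : ∀ x ∈ Ioo (0:ℝ) 1, 48 * x * (3 - 4 * u x + w x)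
    = x * Q x ^ 2 + 12 * (1 + x^2) * P x - x * P x ^ 2

namespace RescaledBerger

variable {σ : ℝ} {E P Q u w : ℝ → ℝ}

lemma one_sub_sq_pos {x : ℝ} (hx : x ∈ Ioo (0:ℝ) 1) : 0 < 1 - x^2 := by
  nlinarith [hx.1, hx.2]

lemma neg_of_weight_mul_neg {x d : ℝ} (hx : x ∈ Ioo (0:ℝ) 1) (h : x * (1 - x^2) * d < 0) :
    d < 0 := by
  have := mul_pos hx.1 (one_sub_sq_pos hx)
  by_contra! hd
  linarith [mul_nonneg this.le hd]

lemma P_nonneg (S : RescaledBerger σ E P Q u w) : ∀ x ∈ Ioo (0:ℝ) 1, 0 ≤ P x := by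
  refine nonneg_of_deriv_neg_of_neg S.dP S.P_one.ge fun x hx hneg => neg_of_weight_mul_neg hx ?_
  rw [S.P_eq x hx]
  have := hx.1
  nlinarith [mul_nonneg this.le (sq_nonneg (P x)), mul_nonneg this.le (sq_nonneg (Q x)),
    mul_pos (neg_pos.2 hneg) (sq_pos_of_pos this)]

lemma mul_P_le (S : RescaledBerger σ E P Q u w) : ∀ x ∈ Ioo (0:ℝ) 1, x * P x ≤ 12 := by
  refine le_of_deriv_neg_of_gt (h := fun x => x * P x) (differentiable_id.mul S.dP) (by simp)
    fun x hx hgt => neg_of_weight_mul_neg hx ?_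
  have hder : deriv (fun x => x * P x) x = P x + x * deriv P x := by
    simpa using ((hasDerivAt_id' x).fun_mul (S.dP x).hasDerivAt).deriv
  have hpos : 0 < P x := by
    by_contra! h
    nlinarith [hx.1]
  have : x * (1 - x^2) * (P x + x * deriv P x)
      = x * P x * (1 - x^2) + x * (x * (1 - x^2) * deriv P x) := by ring
  rw [hder, this, S.P_eq x hx]
  have h0 := mul_pos hx.1 hpos
  nlinarith [mul_pos h0 (sub_pos.2 hgt), sq_nonneg (x * Q x)]

lemma Q_nonneg (S : RescaledBerger σ E P Q u w)
    (hA : ∀ x ∈ Ioo (0:ℝ) 1, 0 ≤ σ * (u x - w x)) : ∀ x ∈ Ioo (0:ℝ) 1, 0 ≤ Q x := by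
  have key : ∀ x ∈ Ioo (0:ℝ) 1, 0 ≤ E x * Q x := by
    refine nonneg_of_deriv_neg_of_neg (h := fun x => E x * Q x) (S.dE.mul S.dQ)
      (by simp [S.Q_one]) fun x hx hneg => neg_of_weight_mul_neg hx ?_
    have hder : deriv (fun x => E x * Q x) x = deriv E x * Q x + E x * deriv Q x :=
      ((S.dE x).hasDerivAt.mul (S.dQ x).hasDerivAt).deriv
    have : x * (1 - x^2) * (deriv E x * Q x + E x * deriv Q x)
      = x * ((1 - x^2) * deriv E x) * Q x + E x * (x * (1 - x^2) * deriv Q x) := by ring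
    rw [hder, this, S.E_eq x hx, S.Q_eq x hx]
    have h1 := mul_nonneg (mul_nonneg (S.E_pos x).le hx.1.le) (hA x hx)
    have h2 := mul_neg_of_neg_of_pos hneg (show 0 < 2 + 2 * x^2 by positivity)
    linarith
  intro x hx
  exact nonneg_of_mul_nonneg_right (key x hx) (S.E_pos x)

lemma P_pos (S : RescaledBerger σ E P Q u w)
    (hA : ∀ x ∈ Ioo (0:ℝ) 1, 0 < σ * (u x - w x)) : ∀ x ∈ Ioo (0:ℝ) 1, 0 < P x := by
  intro x hx
  refine (S.P_nonneg x hx).lt_of_ne fun h0 => ?_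
  have hQ := S.Q_nonneg fun x hx => (hA x hx).le
  have hnhds : Ioo (0:ℝ) 1 ∈ nhds x := Ioo_mem_nhds hx.1 hx.2
  have hPmin : IsLocalMin P x := by
    filter_upwards [hnhds] with y hy
    rw [← h0]
    exact S.P_nonneg y hy
  have hQx : Q x = 0 := by
    have := S.P_eq x hx
    rw [hPmin.deriv_eq_zero, ← h0] at this
    have h2 : x * Q x ^ 2 = 0 := by linarith
    simpa [hx.1.ne'] using h2
  have hQmin : IsLocalMin Q x := by
    filter_upwards [hnhds] with y hy
    rw [hQx]
    exact hQ y hy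
  have := S.Q_eq x hx
  rw [hQmin.deriv_eq_zero, hQx] at this
  linarith [mul_pos hx.1 (hA x hx)]

lemma Q_sq_add_le (S : RescaledBerger σ E P Q u w) : ∀ x ∈ Ioo (0:ℝ) 1,
    Q x ^ 2 + 12 * x * P x ≤ 48 * (3 - 4 * u x + w x) := by
  intro x hx
  have h1 := S.constraint x hx
  have h2 := mul_nonneg (S.P_nonneg x hx) (sub_nonneg.2 (S.mul_P_le x hx))
  refine le_of_mul_le_mul_left ?_ hx.1
  linarith

/-- The derivative of the barrier function comparing `Q` with `|u - w|`. -/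
lemma barrier_deriv (S : RescaledBerger σ E P Q u w) (k : ℝ) (x : ℝ) :
    deriv (fun x => Q x + k * Q x ^ 2 - 4 * x * (σ * (u x - w x))) x
      = (1 + 2 * k * Q x) * deriv Q x - 4 * (σ * (u x - w x))
        - 4 * x * (σ * (deriv u x - deriv w x)) := by
  have hQ := (S.dQ x).hasDerivAt
  have h := (hQ.add ((hQ.pow 2).const_mul k)).sub (((hasDerivAt_id x).const_mul 4).mul
    (((S.du x).hasDerivAt.sub (S.dw x).hasDerivAt).const_mul σ))
  refine (h.congr_deriv ?_).deriv
  simp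
  ring

lemma barrier_differentiable (S : RescaledBerger σ E P Q u w) (k : ℝ) :
    Differentiable ℝ (fun x => Q x + k * Q x ^ 2 - 4 * x * (σ * (u x - w x))) :=
  (S.dQ.add ((S.dQ.pow 2).const_mul k)).sub ((differentiable_id.const_mul 4).mul
    ((S.du.sub S.dw).const_mul σ))

lemma barrier_deriv_eq (S : RescaledBerger σ E P Q u w) (k : ℝ) {x : ℝ}
    (hx : x ∈ Ioo (0:ℝ) 1) :
    x * (1 - x^2) * deriv (fun x => Q x + k * Q x ^ 2 - 4 * x * (σ * (u x - w x))) x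
      = (1 + 2 * k * Q x) * (Q x * (2 + 2 * x^2) - x * P x * Q x / 2
          - 32 * x * (σ * (u x - w x)))
        - 4 * x * (1 - x^2) * (σ * (u x - w x))
        + 4 * x^2 * ((σ * (u x - w x)) * P x / 3 - σ * (σ * (u x - w x)) * Q x / 3
          + Q x * w x) := by
  rw [S.barrier_deriv]
  linear_combination (1 + 2 * k * Q x) * S.Q_eq x hx - 4 * x^2 * σ * S.u_eq x hx
    + 4 * x^2 * σ * S.w_eq x hx + 4 * x^2 * Q x * w x * S.sq_eq

/-- For positive `y2`, the barrier function with `k = 0` is nonnegative. -/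
lemma four_mul_le_of_pos (S : RescaledBerger 1 E P Q u w)
    (hA : ∀ x ∈ Ioo (0:ℝ) 1, 0 < 1 * (u x - w x)) :
    ∀ x ∈ Ioo (0:ℝ) 1, 4 * x * (1 * (u x - w x)) ≤ Q x := by
  have hQ := S.Q_nonneg fun x hx => (hA x hx).le
  have key := nonneg_of_deriv_neg_of_neg (S.barrier_differentiable 0)
    (by simp [S.Q_one, S.u_one, S.w_one]) ?_
  · intro x hx
    have := key x hx
    linarith
  intro x hx hneg
  refine neg_of_weight_mul_neg hx ?_
  rw [S.barrier_deriv_eq 0 hx]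
  have hA' := hA x hx
  have hw : w x ≤ 1 := by
    nlinarith [S.Q_sq_add_le x hx, sq_nonneg (Q x), mul_nonneg hx.1.le (S.P_nonneg x hx)]
  have hP := S.P_nonneg x hx
  have hP' := S.mul_P_le x hx
  have hQ' := hQ x hx
  obtain ⟨h0, h1⟩ := hx
  generalize 1 * (u x - w x) = A at *
  generalize P x = p at *
  generalize Q x = q at *
  have hqw : q * w x ≤ q := mul_le_of_le_one_right hQ' hw
  have e1 : 0 ≤ x^2 * (q - q * w x) := mul_nonneg (sq_nonneg x) (by linarith)
  have e2 : 0 ≤ x * A * (12 - x * p) := by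
    have := mul_pos h0 hA'
    exact mul_nonneg this.le (by linarith)
  have e3 : 0 ≤ x^2 * A * q := by positivity
  have e4 : 0 ≤ x * p * q := by positivity
  have e5 : 0 < 4 * x * A - q := by linarith
  have e6 : 0 ≤ (4 * x * A - q) * (12 - x * p) := mul_nonneg e5.le (by linarith)
  have e7 : 0 ≤ q * (1 - x^2) := mul_nonneg hQ' (by nlinarith)
  have e8 : 0 ≤ (4 * x * A - q) * (1 - x^2) := mul_nonneg e5.le (by nlinarith)
  nlinarith

/-- An a priori bound on `Q` for negative `y2`. -/
lemma mul_Q_le_of_neg (S : RescaledBerger (-1) E P Q u w)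
    (hA : ∀ x ∈ Ioo (0:ℝ) 1, 0 < -1 * (u x - w x))
    (hu : ∀ x ∈ Ioo (0:ℝ) 1, 1 ≤ u x) (hw : ∀ x ∈ Ioo (0:ℝ) 1, w x ≤ u x ^ 4) :
    ∀ x ∈ Ioo (0:ℝ) 1, x * Q x ≤ 9 / 2 := by
  have hQ := S.Q_nonneg fun x hx => (hA x hx).le
  refine le_of_deriv_neg_of_gt (h := fun x => x * Q x) (differentiable_id.mul S.dQ)
    (by norm_num)
    fun x hx hgt => neg_of_weight_mul_neg hx ?_
  have hder : deriv (fun x => x * Q x) x = Q x + x * deriv Q x := by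
    simpa using ((hasDerivAt_id' x).fun_mul (S.dQ x).hasDerivAt).deriv
  have : x * (1 - x^2) * (Q x + x * deriv Q x)
      = x * Q x * (1 - x^2) + x * (x * (1 - x^2) * deriv Q x) := by ring
  rw [hder, this, S.Q_eq x hx]
  have hP := S.P_nonneg x hx
  have hF := S.Q_sq_add_le x hx
  have hQ' := hQ x hx
  have hu' := hu x hx
  have hw' := hw x hx
  obtain ⟨h0, h1⟩ := hx
  generalize P x = p at *
  generalize Q x = q at *
  generalize u x = u at *
  generalize w x = w at *
  have hpx : 0 ≤ x * p := by positivity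
  have hq : 9 / 2 < q := by nlinarith
  have hu2 : 21 / 20 ≤ u := by
    by_contra! hlt
    have hu4 : u ^ 4 - 4 * u + 3 = (u - 1)^2 * (u^2 + 2 * u + 3) := by ring
    have b1 : (u - 1)^2 ≤ (1/20)^2 := by nlinarith
    have b2 : u^2 + 2 * u + 3 ≤ 7 := by nlinarith
    have b3 : (u - 1)^2 * (u^2 + 2 * u + 3) ≤ (1/20)^2 * 7 :=
      mul_le_mul b1 b2 (by positivity) (by positivity)
    nlinarith
  have hAq : q^2 / 48 + 3 / 20 ≤ w - u := by linarith
  have c1 : x^2 * (q^2 / 48 + 3 / 20) ≤ x^2 * (w - u) :=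
    mul_le_mul_of_nonneg_left hAq (sq_nonneg x)
  have c2 : 0 ≤ x * p * (x * q) := by positivity
  have c3 : 0 < (x * q) * (x * q - 9 / 2) := mul_pos (by linarith) (by linarith)
  have c4 : x * q * x ^ 2 ≤ 9 / 2 * x^2 + (x * q - 9 / 2) := by
    nlinarith [mul_nonneg (sub_nonneg.2 hgt.le) (show 0 ≤ 1 - x^2 by nlinarith)]
  nlinarith [sq_nonneg (x * q - 9 / 2), sq_pos_of_pos h0]

/-- For negative `y2`, the barrier function with `k = 5/48` is nonnegative. -/
lemma four_mul_le_of_neg (S : RescaledBerger (-1) E P Q u w)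
    (hA : ∀ x ∈ Ioo (0:ℝ) 1, 0 < -1 * (u x - w x)) :
    ∀ x ∈ Ioo (0:ℝ) 1, 4 * x * (-1 * (u x - w x)) ≤ Q x + 5 / 48 * Q x ^ 2 := by
  have hQ := S.Q_nonneg fun x hx => (hA x hx).le
  have key := nonneg_of_deriv_neg_of_neg (S.barrier_differentiable (5 / 48))
    (by simp [S.Q_one, S.u_one, S.w_one]) ?_
  · intro x hx
    have := key x hx
    linarith
  intro x hx hneg
  refine neg_of_weight_mul_neg hx ?_
  rw [S.barrier_deriv_eq (5 / 48) hx]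
  have hA' := hA x hx
  have hP := S.P_nonneg x hx
  have hw : w x ≤ 1 + 4 / 3 * (-1 * (u x - w x)) := by
    nlinarith [S.Q_sq_add_le x hx, sq_nonneg (Q x), mul_nonneg hx.1.le hP]
  have hP' := S.mul_P_le x hx
  have hQ' := hQ x hx
  obtain ⟨h0, h1⟩ := hx
  generalize -1 * (u x - w x) = A at *
  generalize P x = p at *
  generalize Q x = q at *
  generalize w x = w at *
  have e1 : x^2 * (q * w) ≤ x^2 * (q * (1 + 4 / 3 * A)) :=
    mul_le_mul_of_nonneg_left (mul_le_mul_of_nonneg_left hw hQ') (sq_nonneg x)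
  set B := 4 * x * A - (q + 5 / 48 * q^2) with hB
  have hBpos : 0 < B := by linarith
  have hAx : x * A = (B + q + 5 / 48 * q^2) / 4 := by rw [hB]; ring
  have e2 : 0 ≤ B * (12 - x * p) := mul_nonneg hBpos.le (by linarith)
  have e3 : 0 ≤ x * p * q := by positivity
  have e4 : 0 ≤ x * p * q^2 := by positivity
  have hx2 : 0 ≤ 1 - x^2 := by nlinarith
  have e5 : 0 ≤ B * (1 - x^2) := mul_nonneg hBpos.le hx2
  have e6 : 0 ≤ q * (1 - x^2) := mul_nonneg hQ' hx2
  have e7 : 0 ≤ q^2 * (1 - x^2) := mul_nonneg (sq_nonneg q) hx2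
  have e8 : 0 ≤ B * q * (1 - x) := mul_nonneg (by positivity) (by linarith)
  have e9 : 0 ≤ q^2 * (1 - x) := mul_nonneg (by positivity) (by linarith)
  have e10 : 0 ≤ q^3 * (1 - x) := mul_nonneg (by positivity) (by linarith)
  have expand : (1 + 2 * (5 / 48) * q) * (q * (2 + 2 * x^2) - x * p * q / 2 - 32 * x * A)
        - 4 * x * (1 - x^2) * A + 4 * x^2 * (A * p / 3 - -1 * A * q / 3
          + q * (1 + 4 / 3 * A))
      = (1 + 2 * (5 / 48) * q) * (q * (2 + 2 * x^2) - x * p * q / 2 - 32 * (x * A))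
        - 4 * (1 - x^2) * (x * A) + 4 / 3 * (x * p) * (x * A) + 4 * x^2 * q
          + 20 / 3 * x * q * (x * A) := by ring
  have : (1 + 2 * (5 / 48) * q) * (q * (2 + 2 * x^2) - x * p * q / 2 - 32 * x * A)
        - 4 * x * (1 - x^2) * A + 4 * x^2 * (A * p / 3 - -1 * A * q / 3
          + q * (1 + 4 / 3 * A)) < 0 := by
    rw [expand, hAx]
    nlinarith
  linarith

/-- The pointwise inequality follows once a suitable differential inequality is available. -/
lemma sq_lt_of_bound (S : RescaledBerger σ E P Q u w)
    (hA : ∀ x ∈ Ioo (0:ℝ) 1, 0 < σ * (u x - w x))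
    (hb : ∀ x ∈ Ioo (0:ℝ) 1, 3 < 4 * x^2 → 36 * (x * P x) ≤ (4 * x^2 - 3) * Q x ^ 2 →
      3 - 4 * u x + w x ≤ x^2 * Q x ^ 2 / 36 →
      x * P x * (1 - (3 - 4 * u x + w x) / 3 + x^2 * Q x ^ 2 / 36)
        + 4 / 9 * (4 * x^2 - 3) * (Q x * (x * (σ * (u x - w x))))
        ≤ 2 / 9 * (4 * x^2 - 3) * Q x ^ 2) :
    ∀ x ∈ Ioo (0:ℝ) 1, x^2 * Q x ^ 2 / 36 < 3 - 4 * u x + w x := by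
  have hZ : ∀ x, HasDerivAt (fun x => 3 - 4 * u x + w x - x^2 * Q x ^ 2 / 36)
      (-4 * deriv u x + deriv w x - (2 * x * Q x ^ 2 + 2 * x^2 * Q x * deriv Q x) / 36) x := by
    intro x
    have h := ((((S.du x).hasDerivAt.const_mul 4).const_sub 3).add (S.dw x).hasDerivAt).sub
      ((((hasDerivAt_id x).pow 2).mul ((S.dQ x).hasDerivAt.pow 2)).div_const 36)
    refine h.congr_deriv ?_
    simp
    ring
  have hneg : ∀ x ∈ Ioo (0:ℝ) 1, 3 - 4 * u x + w x - x^2 * Q x ^ 2 / 36 ≤ 0 →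
      deriv (fun x => 3 - 4 * u x + w x - x^2 * Q x ^ 2 / 36) x < 0 := by
    intro x hx hle
    refine neg_of_weight_mul_neg hx ?_
    have hP := mul_pos hx.1 (S.P_pos hA x hx)
    have hF := S.Q_sq_add_le x hx
    have h1 : 36 * (x * P x) ≤ (4 * x^2 - 3) * Q x ^ 2 := by linarith
    have hprod : 0 < (4 * x^2 - 3) * Q x ^ 2 := by linarith
    have hx3 : 3 < 4 * x^2 := by
      by_contra! hc
      linarith [mul_nonneg (sub_nonneg.2 hc) (sq_nonneg (Q x))]
    have hQ2 : 0 < Q x ^ 2 := pos_of_mul_pos_right hprod (by linarith)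
    have hm := hb x hx hx3 h1 (by linarith)
    have hid : x * (1 - x^2) * deriv (fun x => 3 - 4 * u x + w x - x^2 * Q x ^ 2 / 36) x
        = x * P x * (1 - (3 - 4 * u x + w x) / 3 + x^2 * Q x ^ 2 / 36)
          + 4 / 9 * (4 * x^2 - 3) * (Q x * (x * (σ * (u x - w x))))
          - x^2 * Q x ^ 2 * (3 + x^2) / 18 := by
      rw [(hZ x).deriv]
      linear_combination -4 * x * S.u_eq x hx + x * S.w_eq x hx
        - x^2 * Q x / 18 * S.Q_eq x hx
    rw [hid]
    have hx2 := one_sub_sq_pos hx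
    have := mul_pos hQ2 (mul_pos hx2 (show 0 < 12 - x^2 by linarith))
    linarith
  have hnn := nonneg_of_deriv_neg_of_neg (fun x => (hZ x).differentiableAt)
    (by simp [S.Q_one, S.u_one, S.w_one]; norm_num) fun x hx h => hneg x hx h.le
  intro x hx
  by_contra! hle
  have hzero : 3 - 4 * u x + w x - x^2 * Q x ^ 2 / 36 = 0 :=
    le_antisymm (by linarith) (hnn x hx)
  have hmin : IsLocalMin (fun x => 3 - 4 * u x + w x - x^2 * Q x ^ 2 / 36) x := by
    filter_upwards [Ioo_mem_nhds hx.1 hx.2] with y hy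
    rw [hzero]
    exact hnn y hy
  exact (hneg x hx hzero.le).ne hmin.deriv_eq_zero

lemma sq_lt_of_pos (S : RescaledBerger 1 E P Q u w)
    (hA : ∀ x ∈ Ioo (0:ℝ) 1, 0 < 1 * (u x - w x)) :
    ∀ x ∈ Ioo (0:ℝ) 1, x^2 * Q x ^ 2 / 36 < 3 - 4 * u x + w x := by
  refine S.sq_lt_of_bound hA fun x hx hx3 hP hF => ?_
  have hQ := S.Q_nonneg (fun x hx => (hA x hx).le) x hx
  have hxP := mul_nonneg hx.1.le (S.P_nonneg x hx)
  have hF' := S.Q_sq_add_le x hx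
  have hx2 := one_sub_sq_pos hx
  have h1 : 1 - (3 - 4 * u x + w x) / 3 + x^2 * Q x ^ 2 / 36 ≤ 4 := by
    linarith [mul_nonneg hx2.le (sq_nonneg (Q x)), hA x hx, S.u_pos x]
  have h2 := mul_le_mul_of_nonneg_left h1 hxP
  have h3 := mul_le_mul_of_nonneg_left (S.four_mul_le_of_pos hA x hx) hQ
  have h4 := mul_le_mul_of_nonneg_left h3 (show 0 ≤ 4 * x^2 - 3 by linarith)
  linarith

lemma sq_lt_of_neg (S : RescaledBerger (-1) E P Q u w)
    (hA : ∀ x ∈ Ioo (0:ℝ) 1, 0 < -1 * (u x - w x))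
    (hu : ∀ x ∈ Ioo (0:ℝ) 1, 1 ≤ u x) (hw : ∀ x ∈ Ioo (0:ℝ) 1, w x ≤ u x ^ 4) :
    ∀ x ∈ Ioo (0:ℝ) 1, x^2 * Q x ^ 2 / 36 < 3 - 4 * u x + w x := by
  refine S.sq_lt_of_bound hA fun x hx hx3 hP hF => ?_
  have hQ := S.Q_nonneg (fun x hx => (hA x hx).le) x hx
  have hxP := mul_nonneg hx.1.le (S.P_nonneg x hx)
  have hF' := S.Q_sq_add_le x hx
  have hT := S.mul_Q_le_of_neg hA hu hw x hx
  have hx' : 4 / 5 < x := by nlinarith [hx.1]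
  have hQ' : Q x ≤ 45 / 8 := by nlinarith
  have hT2 : x^2 * Q x ^ 2 ≤ (9 / 2)^2 := by
    rw [← mul_pow]
    exact pow_le_pow_left₀ (mul_nonneg hx.1.le hQ) hT 2
  have h1 : 1 - (3 - 4 * u x + w x) / 3 + x^2 * Q x ^ 2 / 36 ≤ 25 / 16 := by
    linarith [sq_nonneg (Q x)]
  have h2 := mul_le_mul_of_nonneg_left h1 hxP
  have h3 := mul_le_mul_of_nonneg_left (S.four_mul_le_of_neg hA x hx) hQ
  have h5 : Q x * (Q x + 5 / 48 * Q x ^ 2) ≤ 203 / 128 * Q x ^ 2 := by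
    nlinarith [mul_nonneg (sq_nonneg (Q x)) (sub_nonneg.2 hQ')]
  have h4 := mul_le_mul_of_nonneg_left (h3.trans h5) (show 0 ≤ 4 * x^2 - 3 by linarith)
  linarith

end RescaledBerger

lemma not_isLocalMin_of_deriv_deriv_neg {f : ℝ → ℝ} {x : ℝ} (hf : deriv (deriv f) x < 0)
    (hc : ContinuousAt f x) : ¬ IsLocalMin f x := by
  intro hmin
  have hmax := isLocalMax_of_deriv_deriv_neg hf hmin.deriv_eq_zero hc
  have hconst : f =ᶠ[nhds x] fun _ => f x := by
    filter_upwards [hmin, hmax] with y h1 h2 using le_antisymm h2 h1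
  have := hconst.deriv.deriv_eq
  simp at this
  linarith

lemma exp_rpow_mul_exp_rpow (a b s t : ℝ) : exp a ^ s * exp b ^ t = exp (a * s + b * t) := by
  rw [← exp_mul, ← exp_mul, ← exp_add]

lemma mul_exp_sub_exp_pos {σ a b : ℝ} (hσ : σ = 1 ∨ σ = -1) (h : 0 < σ * b) :
    0 < σ * (exp (-(a + b) / 3) - exp (-(a + 4 * b) / 3)) := by
  rcases hσ with rfl | rfl
  · have : exp (-(a + 4 * b) / 3) < exp (-(a + b) / 3) := exp_lt_exp.2 (by linarith)
    linarith
  · have : exp (-(a + b) / 3) < exp (-(a + 4 * b) / 3) := exp_lt_exp.2 (by linarith)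
    linarith

namespace BergerBVPSolution

variable {y1 y2 : ℝ → ℝ}

lemma y1_one (h : BergerBVPSolution y1 y2) : y1 1 = 0 := exp_eq_one_iff _ |>.1 h.bdryK

lemma y2_one (h : BergerBVPSolution y1 y2) : y2 1 = 0 := exp_eq_one_iff _ |>.1 h.bdryPhi

lemma differentiable_y1 (h : BergerBVPSolution y1 y2) : Differentiable ℝ y1 :=
  h.smooth1.differentiable (by simp)

lemma differentiable_y2 (h : BergerBVPSolution y1 y2) : Differentiable ℝ y2 :=
  h.smooth2.differentiable (by simp)

lemma differentiable_deriv_y1 (h : BergerBVPSolution y1 y2) : Differentiable ℝ (deriv y1) :=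
  (contDiff_infty_iff_deriv.1 h.smooth1).2.differentiable (by simp)

lemma differentiable_deriv_y2 (h : BergerBVPSolution y1 y2) : Differentiable ℝ (deriv y2) :=
  (contDiff_infty_iff_deriv.1 h.smooth2).2.differentiable (by simp)

lemma E1_cleared (h : BergerBVPSolution y1 y2) {x : ℝ} (hx : x ∈ Ioo (0:ℝ) 1) :
    x * (1 - x^2) * deriv (deriv y1) x = (1 + 3 * x^2) * deriv y1 x
      - x * (1 - x^2) * ((deriv y1 x)^2 / 6 + (deriv y2 x)^2 / 3) := by
  have h0 := hx.1.ne'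
  have h1 := (RescaledBerger.one_sub_sq_pos hx).ne'
  have := h.eqE1 x hx
  unfold BergerE1 at this
  field_simp at this
  linear_combination this / 18

lemma E2_cleared (h : BergerBVPSolution y1 y2) {x : ℝ} (hx : x ∈ Ioo (0:ℝ) 1) :
    x * (1 - x^2)^2 * (deriv (deriv y1) x + (deriv y1 x)^2 / 2)
      - (5 + 7 * x^2) * (1 - x^2) * deriv y1 x
      + 8 * x * (6 - 8 * exp (-(y1 x + y2 x) / 3) + 2 * exp (-(y1 x + 4 * y2 x) / 3)) = 0 := by
  have h0 := hx.1.ne'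
  have h1 := (RescaledBerger.one_sub_sq_pos hx).ne'
  have := h.eqE2 x hx
  unfold BergerE2 at this
  rw [mul_assoc 8 (exp (y1 x) ^ _), mul_assoc 2 (exp (y1 x) ^ _), exp_rpow_mul_exp_rpow,
    exp_rpow_mul_exp_rpow,
    show y1 x * (-1 / 3) + y2 x * (-1 / 3) = -(y1 x + y2 x) / 3 by ring,
    show y1 x * (-1 / 3) + y2 x * (-4 / 3) = -(y1 x + 4 * y2 x) / 3 by ring] at this
  generalize exp (-(y1 x + y2 x) / 3) = u at *
  generalize exp (-(y1 x + 4 * y2 x) / 3) = w at *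
  field_simp at this
  linear_combination this / 2

lemma E3_cleared (h : BergerBVPSolution y1 y2) {x : ℝ} (hx : x ∈ Ioo (0:ℝ) 1) :
    x * (1 - x^2)^2 * (deriv (deriv y2) x + deriv y1 x * deriv y2 x / 2)
      = 2 * (1 + 2 * x^2) * (1 - x^2) * deriv y2 x
      + 32 * x * (exp (-(y1 x + y2 x) / 3) - exp (-(y1 x + 4 * y2 x) / 3)) := by
  have h0 := hx.1.ne'
  have h1 := (RescaledBerger.one_sub_sq_pos hx).ne'
  have := h.eqE3 x hx
  unfold BergerE3 at this
  have hw : exp (-(y1 x + 4 * y2 x) / 3) = exp (-(y1 x + y2 x) / 3) * (exp (y2 x))⁻¹ := by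
    rw [← exp_neg, ← exp_add]
    ring_nf
  rw [mul_assoc (32 * _) (exp (y1 x) ^ _), exp_rpow_mul_exp_rpow,
    show y1 x * (-1 / 3) + y2 x * (-1 / 3) = -(y1 x + y2 x) / 3 by ring] at this
  rw [hw]
  generalize exp (-(y1 x + y2 x) / 3) = u at *
  generalize (exp (y2 x))⁻¹ = b at *
  field_simp at this
  linear_combination this / 2

lemma rescaledBerger (h : BergerBVPSolution y1 y2) {σ : ℝ} (hσ : σ = 1 ∨ σ = -1) :
    RescaledBerger σ (fun x => exp (y1 x / 2)) (fun x => (1 - x^2) * deriv y1 x)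
      (fun x => -σ * ((1 - x^2) * deriv y2 x)) (fun x => exp (-(y1 x + y2 x) / 3))
      (fun x => exp (-(y1 x + 4 * y2 x) / 3)) := by
  have hσ2 : σ ^ 2 = 1 := by rcases hσ with rfl | rfl <;> norm_num
  have hy1 := fun x => (h.differentiable_y1 x).hasDerivAt
  have hy2 := fun x => (h.differentiable_y2 x).hasDerivAt
  have hq : ∀ x : ℝ, HasDerivAt (fun x : ℝ => 1 - x^2) (-(2 * x)) x := fun x => by
    simpa using ((hasDerivAt_id' x).fun_pow 2).const_sub 1
  have hE : ∀ x, HasDerivAt (fun x => exp (y1 x / 2)) _ x := fun x => ((hy1 x).div_const 2).exp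
  have hP : ∀ x, HasDerivAt (fun x => (1 - x^2) * deriv y1 x) _ x := fun x =>
    (hq x).fun_mul (h.differentiable_deriv_y1 x).hasDerivAt
  have hQ : ∀ x, HasDerivAt (fun x => -σ * ((1 - x^2) * deriv y2 x)) _ x := fun x =>
    ((hq x).fun_mul (h.differentiable_deriv_y2 x).hasDerivAt).const_mul (-σ)
  have hu : ∀ x, HasDerivAt (fun x => exp (-(y1 x + y2 x) / 3)) _ x := fun x =>
    (((hy1 x).fun_add (hy2 x)).fun_neg.div_const 3).exp
  have hw : ∀ x, HasDerivAt (fun x => exp (-(y1 x + 4 * y2 x) / 3)) _ x := fun x =>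
    (((hy1 x).fun_add ((hy2 x).const_mul 4)).fun_neg.div_const 3).exp
  refine
    { sq_eq := hσ2
      dE := fun x => (hE x).differentiableAt
      dP := fun x => (hP x).differentiableAt
      dQ := fun x => (hQ x).differentiableAt
      du := fun x => (hu x).differentiableAt
      dw := fun x => (hw x).differentiableAt
      E_pos := fun x => exp_pos _
      u_pos := fun x => exp_pos _
      P_one := by simp
      Q_one := by simp
      u_one := by simp [h.y1_one, h.y2_one]
      w_one := by simp [h.y1_one, h.y2_one]
      E_eq := fun x hx => ?_
      P_eq := fun x hx => ?_
      Q_eq := fun x hx => ?_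
      u_eq := fun x hx => ?_
      w_eq := fun x hx => ?_
      constraint := fun x hx => ?_ }
  · rw [(hE x).deriv]
    ring
  · rw [(hP x).deriv]
    linear_combination (1 - x^2) * h.E1_cleared hx
      + x * (1 - x^2)^2 * (deriv y2 x)^2 / 3 * hσ2
  · rw [(hQ x).deriv]
    linear_combination -σ * h.E3_cleared hx
  · rw [(hu x).deriv]
    linear_combination exp (-(y1 x + y2 x) / 3) * (1 - x^2) * deriv y2 x / 3 * hσ2
  · rw [(hw x).deriv]
    linear_combination exp (-(y1 x + 4 * y2 x) / 3) * (1 - x^2) * deriv y2 x * 4 / 3 * hσ2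
  · linear_combination 3 * h.E2_cleared hx - 3 * (1 - x^2) * h.E1_cleared hx
      - x * (1 - x^2)^2 * (deriv y2 x)^2 * hσ2

lemma mul_y2_nonneg (h : BergerBVPSolution y1 y2) {σ : ℝ} (hσ : σ = 1 ∨ σ = -1)
    (h0 : 0 < σ * y2 0) : ∀ x ∈ Icc (0:ℝ) 1, 0 ≤ σ * y2 x := by
  have hcont : Continuous fun x => σ * y2 x := continuous_const.mul h.differentiable_y2.continuous
  obtain ⟨c, hc, hmin⟩ := isCompact_Icc.exists_isMinOn (nonempty_Icc.2 zero_le_one)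
    hcont.continuousOn (s := Icc (0:ℝ) 1)
  suffices hY : 0 ≤ σ * y2 c from fun x hx => hY.trans (hmin hx)
  by_contra! hneg
  have hc' : c ∈ Ioo (0:ℝ) 1 := by
    refine ⟨lt_of_le_of_ne hc.1 ?_, lt_of_le_of_ne hc.2 ?_⟩
    · rintro rfl
      linarith
    · rintro rfl
      simp [h.y2_one] at hneg
  have hloc : IsLocalMin (fun x => σ * y2 x) c := hmin.isLocalMin (Icc_mem_nhds hc'.1 hc'.2)
  have hd : deriv (fun x => σ * y2 x) = fun x => σ * deriv y2 x := by
    ext x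
    exact deriv_const_mul_field σ
  have hd0 : σ * deriv y2 c = 0 := by
    simpa [hd] using hloc.deriv_eq_zero
  refine not_isLocalMin_of_deriv_deriv_neg ?_ hcont.continuousAt hloc
  rw [hd, deriv_const_mul_field]
  have hA := mul_exp_sub_exp_pos (σ := -σ) (a := y1 c) (b := y2 c)
    (by rcases hσ with rfl | rfl <;> simp) (by linarith)
  have h3 := h.E3_cleared hc'
  have hpos := mul_pos hc'.1 (sq_pos_of_pos (RescaledBerger.one_sub_sq_pos hc'))
  have hcA := mul_pos hc'.1 hA
  have hprod : c * (1 - c^2)^2 * (σ * deriv (deriv y2) c) < 0 := by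
    linear_combination 32 * hcA + σ * h3
      + (2 * (1 + 2 * c^2) * (1 - c^2) - c * (1 - c^2)^2 * deriv y1 c / 2) * hd0
  by_contra! hge
  linarith [mul_nonneg hpos.le hge]

lemma mul_y2_pos (h : BergerBVPSolution y1 y2) {σ : ℝ} (hσ : σ = 1 ∨ σ = -1)
    (h0 : 0 < σ * y2 0) : ∀ x ∈ Ioo (0:ℝ) 1, 0 < σ * y2 x := by
  have hnn := h.mul_y2_nonneg hσ h0
  have hA : ∀ x ∈ Ioo (0:ℝ) 1,
      0 ≤ σ * (exp (-(y1 x + y2 x) / 3) - exp (-(y1 x + 4 * y2 x) / 3)) := by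
    intro x hx
    rcases (hnn x (Ioo_subset_Icc_self hx)).eq_or_lt with h' | h'
    · have : y2 x = 0 := by rcases hσ with rfl | rfl <;> linarith
      simp [this]
    · exact (mul_exp_sub_exp_pos hσ h').le
  have hQ := (h.rescaledBerger hσ).Q_nonneg hA
  have hcont : Continuous fun x => σ * y2 x := continuous_const.mul h.differentiable_y2.continuous
  have hanti : AntitoneOn (fun x => σ * y2 x) (Icc 0 1) := by
    refine antitoneOn_of_deriv_nonpos (convex_Icc 0 1) hcont.continuousOn
      (h.differentiable_y2.const_mul σ).differentiableOn fun x hx => ?_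
    rw [interior_Icc] at hx
    rw [deriv_const_mul_field]
    by_contra! hpos
    linarith [hQ x hx, mul_pos hpos (RescaledBerger.one_sub_sq_pos hx)]
  intro x hx
  refine (hnn x (Ioo_subset_Icc_self hx)).lt_of_ne fun hx0 => ?_
  have hzero : ∀ y ∈ Ioo x 1, y2 y = 0 := by
    intro y hy
    have hy' : y ∈ Icc (0:ℝ) 1 := ⟨hx.1.le.trans hy.1.le, hy.2.le⟩
    have h1 : σ * y2 y ≤ σ * y2 x := hanti (Ioo_subset_Icc_self hx) hy' hy.1.le
    have h2 := hnn y hy'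
    rcases hσ with rfl | rfl <;> linarith
  obtain ⟨z, hz⟩ := exists_between hx.2
  have hEq : EqOn y2 0 (Ioc 0 1) :=
    h.analytic2.eqOn_zero_of_preconnected_of_eventuallyEq_zero isPreconnected_Ioc
      (z₀ := z) ⟨hx.1.trans hz.1, hz.2.le⟩
      (Filter.eventuallyEq_of_mem (Ioo_mem_nhds hz.1 hz.2) fun y hy => hzero y hy)
  have hcl : (0:ℝ) ∈ closure (Ioc (0:ℝ) 1) := by
    rw [closure_Ioc zero_ne_one]
    exact ⟨le_rfl, zero_le_one⟩
  have : y2 0 = 0 :=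
    hEq.closure h.differentiable_y2.continuous continuous_zero hcl
  simp [this] at h0

lemma y1_nonpos (h : BergerBVPSolution y1 y2) : ∀ x ∈ Ioo (0:ℝ) 1, y1 x ≤ 0 := by
  have hP := (h.rescaledBerger (Or.inl rfl)).P_nonneg
  have hmono : MonotoneOn y1 (Icc 0 1) := by
    refine monotoneOn_of_deriv_nonneg (convex_Icc 0 1) h.differentiable_y1.continuous.continuousOn
      h.differentiable_y1.differentiableOn fun x hx => ?_
    rw [interior_Icc] at hx
    exact nonneg_of_mul_nonneg_right (hP x hx) (RescaledBerger.one_sub_sq_pos hx)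
  intro x hx
  simpa [h.y1_one] using hmono (Ioo_subset_Icc_self hx) (right_mem_Icc.2 zero_le_one) hx.2.le

end BergerBVPSolution

/-- for a solution of the Berger BVP with `phi(0) ≠ 1`, on `(0,1)`:
`3 − 4(phi K)^{-1/3} + K^{-1/3} phi^{-4/3} > (1/36)x²(1−x²)²(y2')² ≥ 0`. -/
theorem berger_pointwise_inequality (y1 y2 : ℝ → ℝ)
    (hsol : BergerBVPSolution y1 y2)
    (hphi0 : Real.exp (y2 0) ≠ 1) :
    ∀ x ∈ Ioo (0:ℝ) 1,
      (1/36) * x^2 * (1 - x^2)^2 * (deriv y2 x)^2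
        < 3 - 4 * (Real.exp (y2 x) * Real.exp (y1 x)) ^ (-(1:ℝ)/3)
          + Real.exp (y1 x) ^ (-(1:ℝ)/3) * Real.exp (y2 x) ^ (-(4:ℝ)/3) ∧
      0 ≤ (1/36) * x^2 * (1 - x^2)^2 * (deriv y2 x)^2 := by
  intro x hx
  refine ⟨?_, by positivity⟩
  have hy : y2 0 ≠ 0 := fun h0 => hphi0 (by simp [h0])
  have h1 : (exp (y2 x) * exp (y1 x)) ^ (-(1:ℝ)/3) = exp (-(y1 x + y2 x) / 3) := by
    rw [← exp_add, ← exp_mul]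
    ring_nf
  have h2 : exp (y1 x) ^ (-(1:ℝ)/3) * exp (y2 x) ^ (-(4:ℝ)/3)
      = exp (-(y1 x + 4 * y2 x) / 3) := by
    rw [exp_rpow_mul_exp_rpow]
    ring_nf
  rw [h1, h2]
  rcases hy.lt_or_gt with hlt | hgt
  · have hpos := hsol.mul_y2_pos (Or.inr rfl) (show 0 < -1 * y2 0 by linarith)
    have := (hsol.rescaledBerger (Or.inr rfl)).sq_lt_of_neg
      (fun x hx => mul_exp_sub_exp_pos (Or.inr rfl) (hpos x hx))
      (fun x hx => one_le_exp (by linarith [hpos x hx, hsol.y1_nonpos x hx]))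
      (fun x hx => by
        rw [← exp_nat_mul]
        exact exp_le_exp.2 (by push_cast; linarith [hsol.y1_nonpos x hx])) x hx
    linarith
  · have hpos := hsol.mul_y2_pos (Or.inl rfl) (show 0 < 1 * y2 0 by linarith)
    have := (hsol.rescaledBerger (Or.inl rfl)).sq_lt_of_pos
      (fun x hx => mul_exp_sub_exp_pos (Or.inl rfl) (hpos x hx)) x hx
    linarith
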